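/- Deterministic MWEM error bound: let Q be a nonempty finite set of queries, f a dataset with ∑_x f(x) = M > 0, and h₀ the uniform dataset h₀(x) = M/|X|. Let k ≥ 1 and suppose for l = 1,…,k we are given queries q_l ∈ Q and measurements m_l ∈ ℝ with |m_l − q_l(h_{l−1})| ≤ 2M, and h_l is the multiplicative-weights update of h_{l−1} with respect to (q_l, m_l). Suppose s, a ≥ 0 are such that for each l ∈ {1,…,k}: max_{q∈Q} |q(h_{l−1}) − q(f)| ≤ |q_l(h_{l−1}) − q_l(f)| + s (selection guarantee) and |m_l − q_l(f)| ≤ a (measurement guarantee). Then (1/k)·∑_{l=1}^k max_{q∈Q} |q(h_{l−1}) − q(f)| ≤ 2M·√(ln|X| / k) + a + s. -/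

import Mathlib

/-- The value of a query `q : X → {0,1}` on a dataset `h : X → ℝ`. -/
noncomputable def qVal {X : Type*} [Fintype X] (q h : X → ℝ) : ℝ :=
  ∑ x : X, h x * q x

/-- The multiplicative-weights update of a dataset `h` of size `M` with respect to a
query `q` and a measurement `m`. -/
noncomputable def mwUpdate {X : Type*} [Fintype X] (M : ℝ) (q : X → ℝ) (m : ℝ)
    (h : X → ℝ) : X → ℝ :=
  fun x => h x * Real.exp (q x * ((m - qVal q h) / (2 * M))) /
    ((1 / M) * ∑ y : X, h y * Real.exp (q y * ((m - qVal q h) / (2 * M))))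

/-!
The relative entropy `D(f ‖ h_l) = ∑ x, f x * log (f x / h_l x)` is a potential. Writing
`c = (m - q(h)) / (2M)`, one update lowers it by exactly `c * q(f) - M * log Z`, and Hoeffding's
lemma bounds the normalizer by `M * log Z ≤ c * q(h) + M * c ^ 2 / 2`; with this choice of `c` the
drop is at least `((q(h) - q(f)) ^ 2 - (m - q(f)) ^ 2) / (4M)`. Since the potential stays
nonnegative, the squared errors of the selected queries sum to at most
`4M * D(f ‖ h_0) + k * a ^ 2`, and the Cauchy–Schwarz inequality turns this into a bound on their
average.
-/

open Finset Real MeasureTheory ProbabilityTheory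

/-- The coefficient `c = (m - q(h)) / (2M)` by which an update tilts the dataset `h` along `q`. -/
noncomputable def mwExponent {X : Type*} [Fintype X] (M : ℝ) (q : X → ℝ) (m : ℝ)
    (h : X → ℝ) : ℝ :=
  (m - qVal q h) / (2 * M)

/-- The factor `Z` by which an update divides the tilted dataset to restore its size `M`. -/
noncomputable def mwNormalizer {X : Type*} [Fintype X] (M : ℝ) (q : X → ℝ) (m : ℝ)
    (h : X → ℝ) : ℝ :=
  (1 / M) * ∑ x, h x * exp (q x * mwExponent M q m h)

/-- The relative entropy of a dataset `f` with respect to a dataset `h`. It is not normalized: for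
two datasets of size `M` it is `M` times the Kullback–Leibler divergence of the probability
distributions `f / M` and `h / M`. Where `f` vanishes the summand is `0`. -/
noncomputable def relEntropy {X : Type*} [Fintype X] (f h : X → ℝ) : ℝ :=
  ∑ x, f x * log (f x / h x)

theorem sum_mul_exp_le_exp_of_mem_Icc {ι : Type*} [Fintype ι] {w q : ι → ℝ} {a b : ℝ}
    (hw : ∀ i, 0 ≤ w i) (hw1 : ∑ i, w i = 1) (hq : ∀ i, q i ∈ Set.Icc a b) (t : ℝ) :
    ∑ i, w i * exp (q i * t) ≤ exp (t * ∑ i, w i * q i + (b - a) ^ 2 * t ^ 2 / 8) := by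
  let _ : MeasurableSpace ι := ⊤
  let p : PMF ι := PMF.ofFintype (fun i => ENNReal.ofReal (w i)) (by
    rw [← ENNReal.ofReal_sum_of_nonneg fun i _ => hw i, hw1, ENNReal.ofReal_one])
  have integral_eq (g : ι → ℝ) : ∫ i, g i ∂p.toMeasure = ∑ i, w i * g i := by
    simp only [PMF.integral_eq_sum, p, PMF.ofFintype_apply, ENNReal.toReal_ofReal (hw _),
      smul_eq_mul]
  have centered := (hasSubgaussianMGF_of_mem_Icc (μ := p.toMeasure)
    (measurable_of_finite q).aemeasurable (.of_forall hq)).mgf_le t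
  rw [mgf, integral_eq, integral_eq] at centered
  calc ∑ i, w i * exp (q i * t)
      = exp (t * ∑ i, w i * q i) * ∑ i, w i * exp (t * (q i - ∑ j, w j * q j)) := by
        rw [mul_sum]
        refine sum_congr rfl fun i _ => ?_
        rw [mul_left_comm, ← exp_add]
        ring_nf
    _ ≤ exp (t * ∑ i, w i * q i) * exp (((‖b - a‖₊ / 2) ^ 2 : NNReal) * t ^ 2 / 2) := by gcongr
    _ = exp (t * ∑ i, w i * q i + (b - a) ^ 2 * t ^ 2 / 8) := by
        rw [← exp_add]
        push_cast
        rw [div_pow, norm_eq_abs, sq_abs]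
        ring_nf

section RelEntropy

variable {X : Type*} [Fintype X] {f h : X → ℝ}

theorem relEntropy_nonneg (hf : ∀ x, 0 ≤ f x) (hh : ∀ x, 0 < h x) (hsum : ∑ x, h x ≤ ∑ x, f x) :
    0 ≤ relEntropy f h := by
  have sub_le_mul_log (x : X) : f x - h x ≤ f x * log (f x / h x) := by
    rcases (hf x).eq_or_lt with hfx | hfx
    · simp [← hfx, (hh x).le]
    · calc f x - h x = f x * (1 - (f x / h x)⁻¹) := by field_simp
        _ ≤ f x * log (f x / h x) := by
          gcongr
          exact one_sub_inv_le_log_of_pos (div_pos hfx (hh x))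
  calc 0 ≤ ∑ x, (f x - h x) := by rwa [sum_sub_distrib, sub_nonneg]
    _ ≤ relEntropy f h := sum_le_sum fun x _ => sub_le_mul_log x

theorem relEntropy_const_le (hf : ∀ x, 0 ≤ f x) :
    relEntropy f (fun _ => (∑ x, f x) / Fintype.card X) ≤
      (∑ x, f x) * log (Fintype.card X) := by
  rw [relEntropy, sum_mul]
  refine sum_le_sum fun x _ => ?_
  rcases (hf x).eq_or_lt with hfx | hfx
  · simp [← hfx]
  have hle : f x ≤ ∑ y, f y := single_le_sum (fun y _ => hf y) (mem_univ x)
  have hsum : 0 < ∑ y, f y := hfx.trans_le hle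
  have hcard : (0 : ℝ) < Fintype.card X := mod_cast Fintype.card_pos_iff.2 ⟨x⟩
  gcongr
  rw [div_div_eq_mul_div, div_le_iff₀ hsum, mul_comm]
  gcongr

end RelEntropy

section Update

variable {X : Type*} [Fintype X] [Nonempty X] {M : ℝ} {h : X → ℝ}

theorem mwNormalizer_pos (hM : 0 < M) (hh : ∀ x, 0 < h x) (q : X → ℝ) (m : ℝ) :
    0 < mwNormalizer M q m h :=
  mul_pos (one_div_pos.2 hM) (sum_pos (fun x _ => mul_pos (hh x) (exp_pos _)) univ_nonempty)

theorem mwUpdate_pos (hM : 0 < M) (hh : ∀ x, 0 < h x) (q : X → ℝ) (m : ℝ) (x : X) :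
    0 < mwUpdate M q m h x :=
  div_pos (mul_pos (hh x) (exp_pos _)) (mwNormalizer_pos hM hh q m)

theorem sum_mwUpdate (hM : 0 < M) (hh : ∀ x, 0 < h x) (q : X → ℝ) (m : ℝ) :
    ∑ x, mwUpdate M q m h x = M := by
  have hZ := mwNormalizer_pos hM hh q m
  calc ∑ x, mwUpdate M q m h x
      = (∑ x, h x * exp (q x * mwExponent M q m h)) / mwNormalizer M q m h :=
        (sum_div _ _ _).symm
    _ = M * mwNormalizer M q m h / mwNormalizer M q m h := by
        rw [mwNormalizer, ← mul_assoc, mul_one_div_cancel hM.ne', one_mul]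
    _ = M := mul_div_cancel_right₀ M hZ.ne'

theorem relEntropy_mwUpdate (hM : 0 < M) (hh : ∀ x, 0 < h x) (q : X → ℝ) (m : ℝ) (f : X → ℝ) :
    relEntropy f (mwUpdate M q m h) = relEntropy f h - mwExponent M q m h * qVal q f +
      (∑ x, f x) * log (mwNormalizer M q m h) := by
  have hZ := mwNormalizer_pos hM hh q m
  rw [relEntropy, relEntropy, qVal, mul_sum, sum_mul, ← sum_sub_distrib, ← sum_add_distrib]
  refine sum_congr rfl fun x _ => ?_
  rcases eq_or_ne (f x) 0 with hfx | hfx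
  · simp [hfx]
  have hlog : log (mwUpdate M q m h x) =
      log (h x) + q x * mwExponent M q m h - log (mwNormalizer M q m h) := by
    change log (h x * exp (q x * mwExponent M q m h) / mwNormalizer M q m h) = _
    rw [log_div (mul_pos (hh x) (exp_pos _)).ne' hZ.ne', log_mul (hh x).ne' (exp_pos _).ne',
      log_exp]
  rw [log_div hfx (mwUpdate_pos hM hh q m x).ne', log_div hfx (hh x).ne', hlog]
  ring

theorem mul_log_mwNormalizer_le (hM : 0 < M) (hh : ∀ x, 0 < h x) (hsum : ∑ x, h x = M)
    {q : X → ℝ} (hq : ∀ x, |q x| ≤ 1) (m : ℝ) :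
    M * log (mwNormalizer M q m h) ≤
      mwExponent M q m h * qVal q h + M * mwExponent M q m h ^ 2 / 2 := by
  set c := mwExponent M q m h
  have hweights : ∑ x, h x / M = 1 := by rw [← sum_div, hsum, div_self hM.ne']
  have hZ : mwNormalizer M q m h = ∑ x, h x / M * exp (q x * c) := by
    rw [mwNormalizer, mul_sum]
    exact sum_congr rfl fun x _ => by ring
  have hmean : ∑ x, h x / M * q x = qVal q h / M := by
    rw [qVal, sum_div]
    exact sum_congr rfl fun x _ => by ring
  have hoeffding := sum_mul_exp_le_exp_of_mem_Icc (fun x => (div_pos (hh x) hM).le) hweights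
    (fun x => abs_le.1 (hq x)) c
  rw [← hZ, hmean, ← log_le_iff_le_exp (mwNormalizer_pos hM hh q m)] at hoeffding
  calc M * log (mwNormalizer M q m h)
      ≤ M * (c * (qVal q h / M) + (1 - -1) ^ 2 * c ^ 2 / 8) := by gcongr
    _ = c * qVal q h + M * c ^ 2 / 2 := by field_simp; ring

theorem sq_error_le_relEntropy_sub (hM : 0 < M) (hh : ∀ x, 0 < h x) (hsum : ∑ x, h x = M)
    {f : X → ℝ} (hfsum : ∑ x, f x = M) {q : X → ℝ} (hq : ∀ x, |q x| ≤ 1) (m : ℝ) :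
    (qVal q h - qVal q f) ^ 2 ≤
      4 * M * (relEntropy f h - relEntropy f (mwUpdate M q m h)) + (m - qVal q f) ^ 2 := by
  set c := mwExponent M q m h with hc
  have hm : m = qVal q h + 2 * M * c := by
    rw [hc, mwExponent]
    field_simp
    ring
  have hdrop : c * (qVal q f - qVal q h) - M * c ^ 2 / 2 ≤
      relEntropy f h - relEntropy f (mwUpdate M q m h) := by
    rw [relEntropy_mwUpdate hM hh, hfsum]
    linarith [mul_log_mwNormalizer_le hM hh hsum hq m]
  calc (qVal q h - qVal q f) ^ 2
      ≤ (qVal q h - qVal q f) ^ 2 + 2 * (M * c) ^ 2 := by linarith [sq_nonneg (M * c)]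
    _ = 4 * M * (c * (qVal q f - qVal q h) - M * c ^ 2 / 2) + (m - qVal q f) ^ 2 := by
        rw [hm]
        ring
    _ ≤ _ := by gcongr

end Update

section Iteration

variable {X : Type*} [Fintype X] [Nonempty X] {M : ℝ} {k : ℕ} {h q : ℕ → X → ℝ} {m : ℕ → ℝ}

theorem mwIterate_pos_and_sum (hM : 0 < M) (h0 : ∀ x, 0 < h 0 x) (h0sum : ∑ x, h 0 x = M)
    (hupd : ∀ l ∈ Icc 1 k, h l = mwUpdate M (q l) (m l) (h (l - 1))) {l : ℕ} (hl : l ≤ k) :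
    (∀ x, 0 < h l x) ∧ ∑ x, h l x = M := by
  induction l with
  | zero => exact ⟨h0, h0sum⟩
  | succ l ih =>
    obtain ⟨hpos, _⟩ := ih (l.le_succ.trans hl)
    rw [hupd (l + 1) (mem_Icc.2 ⟨l.succ_pos, hl⟩), Nat.add_sub_cancel]
    exact ⟨mwUpdate_pos hM hpos _ _, sum_mwUpdate hM hpos _ _⟩

variable {f : X → ℝ}

theorem sum_sq_error_le (hf : ∀ x, 0 ≤ f x) (hM : 0 < M) (hfsum : ∑ x, f x = M) (hk : 1 ≤ k)
    (h0 : ∀ x, 0 < h 0 x) (h0sum : ∑ x, h 0 x = M) (hq : ∀ l ∈ Icc 1 k, ∀ x, |q l x| ≤ 1)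
    (hupd : ∀ l ∈ Icc 1 k, h l = mwUpdate M (q l) (m l) (h (l - 1))) :
    ∑ l ∈ Icc 1 k, (qVal (q l) (h (l - 1)) - qVal (q l) f) ^ 2 ≤
      4 * M * relEntropy f (h 0) + ∑ l ∈ Icc 1 k, (m l - qVal (q l) f) ^ 2 := by
  have hstep : ∀ l ∈ Icc 1 k, (qVal (q l) (h (l - 1)) - qVal (q l) f) ^ 2 ≤
      4 * M * (relEntropy f (h (l - 1)) - relEntropy f (h l)) + (m l - qVal (q l) f) ^ 2 := by
    intro l hl
    obtain ⟨hpos, hsum⟩ := mwIterate_pos_and_sum hM h0 h0sum hupd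
      ((l.sub_le 1).trans (mem_Icc.1 hl).2)
    rw [hupd l hl]
    exact sq_error_le_relEntropy_sub hM hpos hsum hfsum (hq l hl) (m l)
  have htelescope : ∑ l ∈ Icc 1 k, (relEntropy f (h (l - 1)) - relEntropy f (h l)) =
      relEntropy f (h 0) - relEntropy f (h k) := by
    have := sum_Icc_sub hk fun l => -relEntropy f (h (l - 1))
    simpa only [Nat.add_sub_cancel, Nat.sub_self, neg_sub_neg] using this
  have hlast : 0 ≤ relEntropy f (h k) := by
    obtain ⟨hpos, hsum⟩ := mwIterate_pos_and_sum hM h0 h0sum hupd le_rfl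
    exact relEntropy_nonneg hf hpos (hsum.trans hfsum.symm).le
  calc _ ≤ 4 * M * (relEntropy f (h 0) - relEntropy f (h k)) +
          ∑ l ∈ Icc 1 k, (m l - qVal (q l) f) ^ 2 := by
        rw [← htelescope, mul_sum, ← sum_add_distrib]
        exact sum_le_sum hstep
    _ ≤ _ := by gcongr; exact sub_le_self _ hlast

theorem avg_abs_error_le (hf : ∀ x, 0 ≤ f x) (hM : 0 < M) (hfsum : ∑ x, f x = M) (hk : 1 ≤ k)
    (h0 : ∀ x, 0 < h 0 x) (h0sum : ∑ x, h 0 x = M) (hq : ∀ l ∈ Icc 1 k, ∀ x, |q l x| ≤ 1)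
    (hupd : ∀ l ∈ Icc 1 k, h l = mwUpdate M (q l) (m l) (h (l - 1))) {a : ℝ}
    (hmeas : ∀ l ∈ Icc 1 k, |m l - qVal (q l) f| ≤ a) :
    (∑ l ∈ Icc 1 k, |qVal (q l) (h (l - 1)) - qVal (q l) f|) / k ≤
      2 * M * √(relEntropy f (h 0) / M / k) + a := by
  have : (0 : ℝ) < k := mod_cast hk
  have ha : 0 ≤ a := (abs_nonneg _).trans (hmeas 1 (mem_Icc.2 ⟨le_rfl, hk⟩))
  have hD : 0 ≤ relEntropy f (h 0) := relEntropy_nonneg hf h0 (h0sum.trans hfsum.symm).le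
  have hnoise : ∑ l ∈ Icc 1 k, (m l - qVal (q l) f) ^ 2 ≤ k * a ^ 2 := by
    simpa using sum_le_card_nsmul (Icc 1 k) _ _ fun l hl => sq_le_sq.2
      ((hmeas l hl).trans (le_abs_self a))
  refine le_of_sq_le_sq ?_ (by positivity)
  calc ((∑ l ∈ Icc 1 k, |qVal (q l) (h (l - 1)) - qVal (q l) f|) / k) ^ 2
      ≤ (∑ l ∈ Icc 1 k, (qVal (q l) (h (l - 1)) - qVal (q l) f) ^ 2) / k := by
        simpa using sum_div_card_sq_le_sum_sq_div_card (s := Icc 1 k)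
          (f := fun l => |qVal (q l) (h (l - 1)) - qVal (q l) f|)
    _ ≤ (4 * M * relEntropy f (h 0) + k * a ^ 2) / k := by
        gcongr
        exact (sum_sq_error_le hf hM hfsum hk h0 h0sum hq hupd).trans (by gcongr)
    _ = (2 * M * √(relEntropy f (h 0) / M / k)) ^ 2 + a ^ 2 := by
        rw [mul_pow, sq_sqrt (by positivity)]
        field_simp
        ring
    _ ≤ (2 * M * √(relEntropy f (h 0) / M / k) + a) ^ 2 := by
        rw [add_sq]
        linarith [show 0 ≤ 2 * (2 * M * √(relEntropy f (h 0) / M / k)) * a by positivity]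

end Iteration

theorem mwem_error_bound_general {X : Type*} [Fintype X] (Q : Finset (X → ℝ)) (hQ : Q.Nonempty)
    (f : X → ℝ) (hf : ∀ x, 0 ≤ f x) (M : ℝ) (hM : 0 < M) (hfsum : ∑ x, f x = M)
    (k : ℕ) (hk : 1 ≤ k) (h : ℕ → X → ℝ) (ql : ℕ → X → ℝ) (ml : ℕ → ℝ)
    (h0 : ∀ x, 0 < h 0 x) (h0sum : ∑ x, h 0 x = M)
    (hql : ∀ l ∈ Icc 1 k, ∀ x, |ql l x| ≤ 1)
    (hupd : ∀ l ∈ Icc 1 k, h l = mwUpdate M (ql l) (ml l) (h (l - 1))) (s a : ℝ)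
    (hsel : ∀ l ∈ Icc 1 k, ∀ q ∈ Q,
      |qVal q (h (l - 1)) - qVal q f| ≤ |qVal (ql l) (h (l - 1)) - qVal (ql l) f| + s)
    (hmeas : ∀ l ∈ Icc 1 k, |ml l - qVal (ql l) f| ≤ a) :
    (1 / (k : ℝ)) * ∑ l ∈ Icc 1 k, Q.sup' hQ (fun q => |qVal q (h (l - 1)) - qVal q f|) ≤
      2 * M * √(relEntropy f (h 0) / M / k) + a + s := by
  have : Nonempty X := univ_nonempty_iff.1 (nonempty_of_sum_ne_zero (hfsum.trans_ne hM.ne'))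
  have : (0 : ℝ) < k := mod_cast hk
  calc _ ≤ (1 / (k : ℝ)) * ∑ l ∈ Icc 1 k,
          (|qVal (ql l) (h (l - 1)) - qVal (ql l) f| + s) := by
        gcongr with l hl
        exact sup'_le _ _ (hsel l hl)
    _ = (∑ l ∈ Icc 1 k, |qVal (ql l) (h (l - 1)) - qVal (ql l) f|) / k + s := by
        rw [sum_add_distrib, sum_const, Nat.card_Icc, Nat.add_sub_cancel, nsmul_eq_mul]
        field_simp
    _ ≤ _ := by
        gcongr
        exact avg_abs_error_le hf hM hfsum hk h0 h0sum hql hupd hmeas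

/-- Deterministic MWEM error bound: under a selection guarantee with slack `s` and a
measurement guarantee with additive error `a`, the average (over the `k` iterations)
of the worst-case query error is at most `2M·√(ln|X|/k) + a + s`. -/
theorem mwem_error_bound {X : Type*} [Fintype X] [Nonempty X]
    (Q : Finset (X → ℝ)) (hQ : Q.Nonempty)
    (hq01 : ∀ q ∈ Q, ∀ x, q x = 0 ∨ q x = 1)
    (f : X → ℝ) (hf : ∀ x, 0 ≤ f x) (M : ℝ) (hM : 0 < M) (hfsum : ∑ x : X, f x = M)
    (k : ℕ) (hk : 1 ≤ k)
    (h : ℕ → X → ℝ) (ql : ℕ → X → ℝ) (ml : ℕ → ℝ)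
    (h0 : h 0 = fun _ => M / Fintype.card X)
    (hql : ∀ l ∈ Finset.Icc 1 k, ql l ∈ Q)
    (hml : ∀ l ∈ Finset.Icc 1 k, |ml l - qVal (ql l) (h (l - 1))| ≤ 2 * M)
    (hupd : ∀ l ∈ Finset.Icc 1 k, h l = mwUpdate M (ql l) (ml l) (h (l - 1)))
    (s a : ℝ) (hs : 0 ≤ s) (ha : 0 ≤ a)
    (hsel : ∀ l ∈ Finset.Icc 1 k, ∀ q ∈ Q,
      |qVal q (h (l - 1)) - qVal q f| ≤ |qVal (ql l) (h (l - 1)) - qVal (ql l) f| + s)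
    (hmeas : ∀ l ∈ Finset.Icc 1 k, |ml l - qVal (ql l) f| ≤ a) :
    (1 / (k : ℝ)) * ∑ l ∈ Finset.Icc 1 k,
        Q.sup' hQ (fun q => |qVal q (h (l - 1)) - qVal q f|)
      ≤ 2 * M * Real.sqrt (Real.log (Fintype.card X) / k) + a + s := by
  have hbound : ∀ l ∈ Icc 1 k, ∀ x, |ql l x| ≤ 1 := fun l hl x => by
    rcases hq01 _ (hql l hl) x with hx | hx <;> simp [hx]
  have hpos : ∀ x, 0 < h 0 x := fun x => by rw [h0]; positivity
  have hsum : ∑ x, h 0 x = M := by simp [h0, mul_div_cancel₀]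
  have hentropy : relEntropy f (h 0) / M ≤ log (Fintype.card X) := by
    rw [div_le_iff₀' hM, h0, ← hfsum]
    exact relEntropy_const_le hf
  refine (mwem_error_bound_general Q hQ f hf M hM hfsum k hk h ql ml hpos hsum hbound hupd s a
    hsel hmeas).trans ?_
  gcongr
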